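/- Central-charge part of the coincidences C_{psi,2B}(n,m) ≅ W_s(so_{2r})^{Z_2} (Appendix C, type 2B): for all integers m, n ≥ 0 and r ≥ 2, the identity c2B(n,m,psi) = cso(r,t) holds in each of the following three cases, whenever psi is not 0 or 1/2, t ≠ 0, and all displayed denominators are nonzero: (1) psi = (2*m-2*n+2*r-1)/(4*m) with m ≥ 1, t = (2*r-2*n-1)/(2*m-2*n+2*r-1); (2) psi = (1+2*m-2*n-2*r)/(2*(1+2*m-2*r)), t = (2*r-2*m-1)/(2*n+2*r-2*m-1); (3) psi = (m-n)/(2*m+2*r-1), t = (2*n+2*r-1)/(2*m+2*r-1). -/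

import Mathlib

noncomputable def c2B (n m psi : ℝ) : ℝ :=
  -((-m + n - psi + 2 * m * psi) * (1 - 2 * m + 2 * n + 4 * m * psi) * (-1 - 2 * m + 2 * n + 2 * psi + 4 * m * psi)) / (2 * psi * (2 * psi - 1))

noncomputable def cso (r t : ℝ) : ℝ :=
  -(r * ((2 * r - 2) * t - 2 * r + 1) * ((2 * r - 1) * t - 2 * r + 2)) / t

/-!
Put `ε = (1, -2 * psi, 2 * psi - 1)`, a triple with sum zero. The numerator of `c2B n m psi` factors
as `(x + ε₁) * (x + ε₂) * (x + ε₃)` up to a constant, where `x = 2 * (n - m) + 4 * m * psi`, and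
`cso r t` has the same shape for the triple `(1, -t, t - 1)` with `x = (2 * r - 1) * (t - 1)`. This
expression is symmetric in the `εᵢ` and invariant under rescaling, so the two central charges agree
as soon as `x` is `2 * r - 1` times one of the `εᵢ` and `-t` is a ratio of the other two: the three
families correspond to the three choices of `i`.
-/

/-- The common form of the central charges `c2B` and `cso`, written in homogeneous parameters
`ε₁, ε₂, ε₃` (meant to have sum zero) so that the permutation symmetry is visible. It takes the
value `0` when some `εᵢ` vanishes. -/
def trialityCharge {K : Type*} [Field K] (ε₁ ε₂ ε₃ x : K) : K :=
  (x + ε₁) * (x + ε₂) * (x + ε₃) / (2 * ε₁ * ε₂ * ε₃)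

section Symmetry

variable {K : Type*} [Field K] (ε₁ ε₂ ε₃ x : K)

theorem trialityCharge_rotate : trialityCharge ε₁ ε₂ ε₃ x = trialityCharge ε₂ ε₃ ε₁ x := by
  unfold trialityCharge
  congr 1 <;> ring

theorem trialityCharge_reverse : trialityCharge ε₁ ε₂ ε₃ x = trialityCharge ε₃ ε₂ ε₁ x := by
  unfold trialityCharge
  congr 1 <;> ring

end Symmetry

theorem c2B_eq_trialityCharge (n m psi : ℝ) :
    c2B n m psi =
      trialityCharge 1 (-(2 * psi)) (2 * psi - 1) (2 * (n - m) + 4 * m * psi) := by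
  unfold c2B trialityCharge
  rw [← mul_div_mul_left _ _ (neg_ne_zero.mpr two_ne_zero : (-2 : ℝ) ≠ 0)]
  congr 1 <;> ring

theorem cso_neg_div_eq_trialityCharge (r : ℝ) {ε₁ ε₂ ε₃ : ℝ} (h₁ : ε₁ ≠ 0) (h₂ : ε₂ ≠ 0)
    (h₃ : ε₃ ≠ 0) (hsum : ε₁ + ε₂ + ε₃ = 0) :
    cso r (-ε₁ / ε₂) = trialityCharge ε₁ ε₂ ε₃ ((2 * r - 1) * ε₃) := by
  obtain rfl : ε₁ = -ε₂ - ε₃ := by linear_combination hsum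
  unfold cso trialityCharge
  field_simp
  ring

section Coincidences

variable {n m r psi : ℝ}

theorem c2B_eq_cso_sub_one_div (h₀ : psi ≠ 0) (h₁ : 2 * psi - 1 ≠ 0)
    (hx : 2 * (n - m) + 4 * m * psi = 2 * r - 1) :
    c2B n m psi = cso r ((2 * psi - 1) / (2 * psi)) := by
  have h₂ : -(2 * psi) ≠ 0 := neg_ne_zero.mpr (mul_ne_zero two_ne_zero h₀)
  rw [c2B_eq_trialityCharge, hx, ← mul_one (2 * r - 1), trialityCharge_reverse,
    ← cso_neg_div_eq_trialityCharge r h₁ h₂ one_ne_zero (by ring), neg_div_neg_eq]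

theorem c2B_eq_cso_one_div (h₀ : psi ≠ 0) (h₁ : 2 * psi - 1 ≠ 0)
    (hx : 2 * (n - m) + 4 * m * psi = (2 * r - 1) * (2 * psi - 1)) :
    c2B n m psi = cso r (1 / (2 * psi)) := by
  have h₂ : -(2 * psi) ≠ 0 := neg_ne_zero.mpr (mul_ne_zero two_ne_zero h₀)
  rw [c2B_eq_trialityCharge, hx,
    ← cso_neg_div_eq_trialityCharge r one_ne_zero h₂ h₁ (by ring), neg_div_neg_eq]

theorem c2B_eq_cso_one_sub (h₀ : psi ≠ 0) (h₁ : 2 * psi - 1 ≠ 0)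
    (hx : 2 * (n - m) + 4 * m * psi = (2 * r - 1) * -(2 * psi)) :
    c2B n m psi = cso r (1 - 2 * psi) := by
  have h₂ : -(2 * psi) ≠ 0 := neg_ne_zero.mpr (mul_ne_zero two_ne_zero h₀)
  rw [c2B_eq_trialityCharge, hx, ← trialityCharge_rotate,
    ← cso_neg_div_eq_trialityCharge r h₁ one_ne_zero h₂ (by ring), div_one, neg_sub]

end Coincidences

theorem stmt14_general (n m r psi t : ℝ) (h₀ : psi ≠ 0) (h₁ : psi ≠ 1 / 2) :
    (psi = (2 * m - 2 * n + 2 * r - 1) / (4 * m) →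
      t = (2 * r - 2 * n - 1) / (2 * m - 2 * n + 2 * r - 1) →
      c2B n m psi = cso r t) ∧
    (psi = (1 + 2 * m - 2 * n - 2 * r) / (2 * (1 + 2 * m - 2 * r)) →
      t = (2 * r - 2 * m - 1) / (2 * n + 2 * r - 2 * m - 1) →
      c2B n m psi = cso r t) ∧
    (psi = (m - n) / (2 * m + 2 * r - 1) →
      t = (2 * n + 2 * r - 1) / (2 * m + 2 * r - 1) →
      c2B n m psi = cso r t) := by
  have h₂ : 2 * psi - 1 ≠ 0 := fun h => h₁ (by linear_combination h / 2)
  refine ⟨fun hpsi ht => ?_, fun hpsi ht => ?_, fun hpsi ht => ?_⟩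
  · obtain ⟨hnum, hden⟩ := div_ne_zero_iff.mp (hpsi ▸ h₀)
    have hlin := (eq_div_iff hden).mp hpsi
    have ht' : t = (2 * psi - 1) / (2 * psi) := by
      rw [ht, div_eq_div_iff hnum (mul_ne_zero two_ne_zero h₀)]
      linear_combination -hlin
    rw [ht']
    exact c2B_eq_cso_sub_one_div h₀ h₂ (by linear_combination hlin)
  · obtain ⟨hnum, hden⟩ := div_ne_zero_iff.mp (hpsi ▸ h₀)
    have hlin := (eq_div_iff hden).mp hpsi
    have hden' : 2 * n + 2 * r - 2 * m - 1 ≠ 0 := fun h => hnum (by linear_combination -h)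
    have ht' : t = 1 / (2 * psi) := by
      rw [ht, div_eq_div_iff hden' (mul_ne_zero two_ne_zero h₀)]
      linear_combination -hlin
    rw [ht']
    exact c2B_eq_cso_one_div h₀ h₂ (by linear_combination hlin)
  · obtain ⟨-, hden⟩ := div_ne_zero_iff.mp (hpsi ▸ h₀)
    have hlin := (eq_div_iff hden).mp hpsi
    have ht' : t = 1 - 2 * psi := by
      rw [ht, div_eq_iff hden]
      linear_combination 2 * hlin
    rw [ht']
    exact c2B_eq_cso_one_sub h₀ h₂ (by linear_combination 2 * hlin)

theorem stmt14 (n m r : ℤ) (hn : 0 ≤ n) (hm : 0 ≤ m) (hr : 2 ≤ r) :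
    (∀ psi t : ℝ,
      psi = (2 * (m : ℝ) - 2 * (n : ℝ) + 2 * (r : ℝ) - 1) / (4 * (m : ℝ)) →
      t = (2 * (r : ℝ) - 2 * (n : ℝ) - 1) / (2 * (m : ℝ) - 2 * (n : ℝ) + 2 * (r : ℝ) - 1) →
      (4 * (m : ℝ)) ≠ 0 →
      (2 * (m : ℝ) - 2 * (n : ℝ) + 2 * (r : ℝ) - 1) ≠ 0 →
      1 ≤ m →
      psi ≠ 0 →
      psi ≠ 1 / 2 →
      t ≠ 0 →
      c2B (n : ℝ) (m : ℝ) psi = cso (r : ℝ) t) ∧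
    (∀ psi t : ℝ,
      psi = (1 + 2 * (m : ℝ) - 2 * (n : ℝ) - 2 * (r : ℝ)) / (2 * (1 + 2 * (m : ℝ) - 2 * (r : ℝ))) →
      t = (2 * (r : ℝ) - 2 * (m : ℝ) - 1) / (2 * (n : ℝ) + 2 * (r : ℝ) - 2 * (m : ℝ) - 1) →
      (2 * (1 + 2 * (m : ℝ) - 2 * (r : ℝ))) ≠ 0 →
      (2 * (n : ℝ) + 2 * (r : ℝ) - 2 * (m : ℝ) - 1) ≠ 0 →
      psi ≠ 0 →
      psi ≠ 1 / 2 →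
      t ≠ 0 →
      c2B (n : ℝ) (m : ℝ) psi = cso (r : ℝ) t) ∧
    (∀ psi t : ℝ,
      psi = ((m : ℝ) - (n : ℝ)) / (2 * (m : ℝ) + 2 * (r : ℝ) - 1) →
      t = (2 * (n : ℝ) + 2 * (r : ℝ) - 1) / (2 * (m : ℝ) + 2 * (r : ℝ) - 1) →
      (2 * (m : ℝ) + 2 * (r : ℝ) - 1) ≠ 0 →
      psi ≠ 0 →
      psi ≠ 1 / 2 →
      t ≠ 0 →
      c2B (n : ℝ) (m : ℝ) psi = cso (r : ℝ) t) :=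
  ⟨fun psi t hpsi ht _ _ _ h₀ h₁ _ => (stmt14_general n m r psi t h₀ h₁).1 hpsi ht,
    fun psi t hpsi ht _ _ h₀ h₁ _ => (stmt14_general n m r psi t h₀ h₁).2.1 hpsi ht,
    fun psi t hpsi ht _ h₀ h₁ _ => (stmt14_general n m r psi t h₀ h₁).2.2 hpsi ht⟩
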